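/- Let W be an m×n real matrix with nonnegative entries and W' an n×m real matrix with nonnegative entries (m, n ≥ 2), and suppose both square matrices W·W' (of size m×m) and W'·W (of size n×n) are nonnegative and irreducible. Then there exists exactly one pair of vectors (a, b), a ∈ ℝ^n and b ∈ ℝ^m with all entries positive and Euclidean norms ‖a‖ = ‖b‖ = 1, such that b = λ·(W·a) and a = μ·(W'·b) for some λ > 0 and μ > 0. -/

import Mathlib

/-!
The Perron eigenvector of an irreducible matrix `A` is obtained by maximizing `t` over the pairs
`(t, x)` with `x` in the simplex and `t • x ≤ A x`. Some polynomial `P` in `A` has all entries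
positive, so if the inequality `t • x ≤ A x` were not an equality, applying `P` would make it strict
in every coordinate and `t` could be increased. Two positive eigenvectors `x`, `y` lie on the same
ray: the difference `y - c • x`, with `c` as large as nonnegativity allows, is a nonnegative
eigenvector with a zero entry, hence vanishes.

If `(a, b)` is an NEBS for `(W, W')`, then `a` is the normalized Perron eigenvector of `W' * W` and
`b` is the normalization of `W a`, which gives both existence and uniqueness.
-/

open Matrix

section OrderedRing

variable {ι κ R : Type*}

lemma exists_apply_pos [Zero R] [PartialOrder R] {x : ι → R} (hx : 0 ≤ x) (hx₀ : x ≠ 0) :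
    ∃ i, 0 < x i :=
  (Pi.lt_def.mp (hx.lt_of_ne' hx₀)).2

lemma mulVec_nonneg [Fintype ι] [Semiring R] [PartialOrder R] [IsOrderedRing R]
    {A : Matrix κ ι R} {x : ι → R} (hA : ∀ i j, 0 ≤ A i j) (hx : 0 ≤ x) : 0 ≤ A *ᵥ x :=
  fun i ↦ dotProduct_nonneg_of_nonneg (hA i) hx

lemma mulVec_apply_pos [Fintype ι] [Semiring R] [PartialOrder R] [IsStrictOrderedRing R]
    {A : Matrix κ ι R} {x : ι → R} {i : κ} {j : ι} (hA : ∀ j, 0 ≤ A i j) (hx : 0 ≤ x)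
    (hij : 0 < A i j) (hj : 0 < x j) : 0 < (A *ᵥ x) i :=
  Finset.sum_pos' (fun k _ ↦ mul_nonneg (hA k) (hx k)) ⟨j, Finset.mem_univ j, mul_pos hij hj⟩

lemma pow_mulVec_eq_pow_smul [Fintype ι] [DecidableEq ι] [CommSemiring R] {A : Matrix ι ι R}
    {x : ι → R} {t : R} (h : A *ᵥ x = t • x) (k : ℕ) : (A ^ k) *ᵥ x = t ^ k • x := by
  induction k with
  | zero => simp
  | succ k ih => rw [pow_succ, ← mulVec_mulVec, h, mulVec_smul, ih, smul_smul, pow_succ']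

lemma exists_smul_le_and_apply_eq [Finite ι] [Nonempty ι] [Field R] [LinearOrder R]
    [IsStrictOrderedRing R] {x : ι → R} (hx : ∀ i, 0 < x i) (y : ι → R) :
    ∃ c : R, c • x ≤ y ∧ ∃ i, c * x i = y i := by
  obtain ⟨i, hi⟩ := Finite.exists_min fun i ↦ y i / x i
  exact ⟨y i / x i, fun j ↦ (le_div_iff₀ (hx j)).mp (hi j), i, div_mul_cancel₀ _ (hx i).ne'⟩

end OrderedRing

section Irreducible

variable {ι κ R : Type*} [LinearOrder R]

-- In `toQuiver A` there is an edge `i ⟶ j` when `0 < A i j`, so its paths run opposite to `hconn`.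
lemma isIrreducible_of_reflTransGen [Ring R] [Nontrivial ι] {A : Matrix ι ι R}
    (hA : ∀ i j, 0 ≤ A i j)
    (hconn : ∀ i j, Relation.ReflTransGen (fun u v ↦ A v u ≠ 0) i j) : A.IsIrreducible := by
  have transGen_of_ne {i j : ι} (hij : i ≠ j) : Relation.TransGen (fun u v ↦ A v u ≠ 0) i j :=
    (Relation.reflTransGen_iff_eq_or_transGen.mp (hconn i j)).resolve_left hij.symm
  have transGen (i j : ι) : Relation.TransGen (fun u v ↦ A v u ≠ 0) i j := by
    rcases eq_or_ne i j with rfl | hij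
    · obtain ⟨k, hk⟩ := exists_ne i
      exact (transGen_of_ne hk.symm).trans (transGen_of_ne hk)
    · exact transGen_of_ne hij
  let : Quiver ι := toQuiver A
  have edge {u v : ι} (huv : A v u ≠ 0) : v ⟶ u := ⟨(hA v u).lt_of_ne' huv⟩
  refine ⟨hA, fun i j ↦ ?_⟩
  induction transGen j i with
  | single huv => exact ⟨(edge huv).toPath, one_pos⟩
  | tail _ huv ih =>
    obtain ⟨path, -⟩ := ih
    exact ⟨(edge huv).toPath.comp path, by simp [Quiver.Path.length_comp]⟩

lemma exists_pos_of_isIrreducible_mul [Ring R] [Fintype κ] [Nontrivial ι] {A : Matrix ι κ R}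
    {B : Matrix κ ι R} (hA : ∀ i j, 0 ≤ A i j) (hAB : (A * B).IsIrreducible) (i : ι) :
    ∃ j, 0 < A i j := by
  by_contra! hrow
  obtain ⟨k, hk⟩ := hAB.exists_pos i
  simp [mul_apply, fun j ↦ le_antisymm (hrow j) (hA i j)] at hk

variable [Fintype ι]

lemma exists_commute_forall_pos [Ring R] [IsStrictOrderedRing R] {A : Matrix ι ι R}
    (hA : A.IsIrreducible) : ∃ P : Matrix ι ι R, Commute P A ∧ ∀ i j, 0 < P i j := by
  classical
  choose k _ hk using (isIrreducible_iff_exists_pow_pos hA.nonneg).mp hA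
  have hpow (e : ℕ) (i j : ι) : 0 ≤ (A ^ e) i j := pow_apply_nonneg hA.nonneg e i j
  refine ⟨∑ i, ∑ j, A ^ k i j, ?_, fun i j ↦ ?_⟩
  · exact Commute.sum_left _ _ _ fun i _ ↦ Commute.sum_left _ _ _ fun j _ ↦
      (Commute.refl A).pow_left _
  · simp only [Matrix.sum_apply]
    exact Finset.sum_pos' (fun _ _ ↦ Finset.sum_nonneg fun _ _ ↦ hpow _ _ _)
      ⟨i, Finset.mem_univ i,
        Finset.sum_pos' (fun _ _ ↦ hpow _ _ _) ⟨j, Finset.mem_univ j, hk i j⟩⟩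

lemma pos_of_isIrreducible_of_mulVec_eq_smul [CommRing R] [IsStrictOrderedRing R]
    {A : Matrix ι ι R} (hA : A.IsIrreducible) {x : ι → R} {t : R} (hx : 0 ≤ x)
    (hx₀ : x ≠ 0) (h : A *ᵥ x = t • x) : 0 < t ∧ ∀ i, 0 < x i := by
  classical
  obtain ⟨j, hj⟩ := exists_apply_pos hx hx₀
  have exists_pow_mul_pos (i : ι) : ∃ k > 0, 0 < t ^ k * x i := by
    obtain ⟨k, hk, hpos⟩ := (isIrreducible_iff_exists_pow_pos hA.nonneg).mp hA i j
    refine ⟨k, hk, ?_⟩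
    simpa [pow_mulVec_eq_pow_smul h] using
      mulVec_apply_pos (pow_apply_nonneg hA.nonneg k i) hx hpos hj
  have ht : 0 ≤ t := by
    have htx : 0 ≤ t * x j := by simpa [h] using mulVec_nonneg hA.nonneg hx j
    exact nonneg_of_mul_nonneg_left htx hj
  constructor
  · obtain ⟨k, hk, hpos⟩ := exists_pow_mul_pos j
    refine ht.lt_of_ne' fun ht₀ ↦ ?_
    simp [ht₀, hk.ne'] at hpos
  · intro i
    obtain ⟨k, -, hpos⟩ := exists_pow_mul_pos i
    exact pos_of_mul_pos_right hpos (pow_nonneg ht k)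

variable [Field R] [IsStrictOrderedRing R]

lemma eigenvalue_le_of_forall_pos [Nonempty ι] {A : Matrix ι ι R} (hA : ∀ i j, 0 ≤ A i j)
    {x y : ι → R} {s t : R} (hx : ∀ i, 0 < x i) (hy : ∀ i, 0 < y i)
    (hAx : A *ᵥ x = s • x) (hAy : A *ᵥ y = t • y) : s ≤ t := by
  obtain ⟨c, hle, i, hi⟩ := exists_smul_le_and_apply_eq hx y
  have hAi : 0 ≤ t * y i - c * (s * x i) := by
    simpa [mulVec_sub, mulVec_smul, hAx, hAy] using mulVec_nonneg hA (sub_nonneg.mpr hle) i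
  refine le_of_mul_le_mul_right ?_ (hy i)
  calc s * y i = c * (s * x i) := by rw [← hi]; ring
    _ ≤ t * y i := sub_nonneg.mp hAi

lemma sameRay_of_isIrreducible_of_mulVec_eq_smul {A : Matrix ι ι R} (hA : A.IsIrreducible)
    {x y : ι → R} {s t : R} (hx : ∀ i, 0 < x i) (hy : ∀ i, 0 < y i)
    (hAx : A *ᵥ x = s • x) (hAy : A *ᵥ y = t • y) : SameRay R x y := by
  cases isEmpty_or_nonempty ι
  · exact .of_subsingleton x y
  obtain rfl : s = t := le_antisymm (eigenvalue_le_of_forall_pos hA.nonneg hx hy hAx hAy)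
    (eigenvalue_le_of_forall_pos hA.nonneg hy hx hAy hAx)
  obtain ⟨c, hle, i, hi⟩ := exists_smul_le_and_apply_eq hx y
  have hc : 0 < c := pos_of_mul_pos_left (hi ▸ hy i) (hx i).le
  have heigen : A *ᵥ (y - c • x) = s • (y - c • x) := by
    rw [mulVec_sub, mulVec_smul, hAx, hAy, smul_sub, smul_comm]
  have hzero : y - c • x = 0 := by
    by_contra hne
    have hpos := (pos_of_isIrreducible_of_mulVec_eq_smul hA (sub_nonneg.mpr hle) hne heigen).2 i
    simp [hi] at hpos
  rw [sub_eq_zero.mp hzero]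
  exact SameRay.sameRay_pos_smul_right x hc

end Irreducible

section PerronFrobenius

variable {ι : Type*} [Fintype ι] {A : Matrix ι ι ℝ}

lemma ne_zero_of_mem_stdSimplex {x : ι → ℝ} (hx : x ∈ stdSimplex ℝ ι) : x ≠ 0 := by
  rintro rfl
  simpa using hx.2

/-- The pairs `(t, x)` with `t ≥ 0` and `x` in the standard simplex such that `t • x ≤ A x`. The
supremum of the first coordinate is the Collatz–Wielandt value of `A`; recording `t` alongside `x`
avoids the function `x ↦ min_{x i ≠ 0} (A x) i / x i`, which is not continuous on the simplex. -/
def collatzWielandtSet (A : Matrix ι ι ℝ) : Set (ℝ × (ι → ℝ)) :=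
  {p | 0 ≤ p.1 ∧ p.2 ∈ stdSimplex ℝ ι ∧ p.1 • p.2 ≤ A *ᵥ p.2}

lemma fst_le_sum_of_mem_collatzWielandtSet (hA : ∀ i j, 0 ≤ A i j) {p : ℝ × (ι → ℝ)}
    (hp : p ∈ collatzWielandtSet A) : p.1 ≤ ∑ i, ∑ j, A i j := by
  obtain ⟨-, hsimplex, hle⟩ := hp
  calc p.1 = ∑ i, p.1 * p.2 i := by rw [← Finset.mul_sum, hsimplex.2, mul_one]
    _ ≤ ∑ i, (A *ᵥ p.2) i := Finset.sum_le_sum fun i _ ↦ hle i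
    _ ≤ ∑ i, ∑ j, A i j := Finset.sum_le_sum fun i _ ↦ Finset.sum_le_sum fun j _ ↦
      mul_le_of_le_one_right (hA i j) (mem_Icc_of_mem_stdSimplex hsimplex j).2

lemma isCompact_collatzWielandtSet (hA : ∀ i j, 0 ≤ A i j) :
    IsCompact (collatzWielandtSet A) := by
  have hclosed : IsClosed (collatzWielandtSet A) :=
    (isClosed_le continuous_const continuous_fst).inter <|
      ((isClosed_stdSimplex ℝ ι).preimage continuous_snd).inter <|
        isClosed_le (continuous_fst.smul continuous_snd)
          (continuous_const.matrix_mulVec continuous_snd)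
  exact (isCompact_Icc.prod (isCompact_stdSimplex ℝ ι)).of_isClosed_subset hclosed
    fun p hp ↦ ⟨⟨hp.1, fst_le_sum_of_mem_collatzWielandtSet hA hp⟩, hp.2.1⟩

lemma collatzWielandtSet_nonempty [Nonempty ι] (hA : ∀ i j, 0 ≤ A i j) :
    (collatzWielandtSet A).Nonempty := by
  classical
  have hsimplex := single_mem_stdSimplex ℝ (Classical.arbitrary ι)
  refine ⟨(0, _), le_rfl, hsimplex, ?_⟩
  rw [zero_smul]
  exact mulVec_nonneg hA hsimplex.1

lemma exists_mem_collatzWielandtSet [Nonempty ι] {t : ℝ} {x : ι → ℝ} (ht : 0 ≤ t)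
    (hx : ∀ i, 0 < x i) (hle : t • x ≤ A *ᵥ x) : ∃ p ∈ collatzWielandtSet A, p.1 = t := by
  have hsum : 0 < ∑ i, x i := Finset.sum_pos (fun i _ ↦ hx i) Finset.univ_nonempty
  refine ⟨(t, (∑ i, x i)⁻¹ • x), ⟨ht, ⟨fun i ↦ ?_, ?_⟩, ?_⟩, rfl⟩
  · exact mul_nonneg (inv_nonneg.mpr hsum.le) (hx i).le
  · simp only [Pi.smul_apply, smul_eq_mul, ← Finset.mul_sum, inv_mul_cancel₀ hsum.ne']
  · simpa only [mulVec_smul, smul_comm t] using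
      smul_le_smul_of_nonneg_left hle (inv_nonneg.mpr hsum.le)

lemma mulVec_eq_smul_of_isMaxOn_collatzWielandtSet [Nonempty ι] (hA : A.IsIrreducible)
    {p : ℝ × (ι → ℝ)} (hp : p ∈ collatzWielandtSet A)
    (hmax : IsMaxOn Prod.fst (collatzWielandtSet A) p) : A *ᵥ p.2 = p.1 • p.2 := by
  obtain ⟨t, x⟩ := p
  obtain ⟨ht, hx, hle⟩ : 0 ≤ t ∧ x ∈ stdSimplex ℝ ι ∧ t • x ≤ A *ᵥ x := hp
  obtain ⟨P, hcomm, hP⟩ := exists_commute_forall_pos hA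
  have mulVec_pos {y : ι → ℝ} (hy : 0 ≤ y) (hy₀ : y ≠ 0) (i : ι) : 0 < (P *ᵥ y) i := by
    obtain ⟨j, hj⟩ := exists_apply_pos hy hy₀
    exact mulVec_apply_pos (fun k ↦ (hP i k).le) hy (hP i j) hj
  have hx₀ : x ≠ 0 := ne_zero_of_mem_stdSimplex hx
  have hPx (i : ι) : 0 < (P *ᵥ x) i := mulVec_pos hx.1 hx₀ i
  by_contra hne
  have hstrict (i : ι) : t * (P *ᵥ x) i < (A *ᵥ (P *ᵥ x)) i := by
    have hpos := mulVec_pos (sub_nonneg.mpr hle) (sub_ne_zero.mpr hne) i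
    rw [mulVec_sub, mulVec_smul, mulVec_mulVec, hcomm.eq, ← mulVec_mulVec] at hpos
    exact sub_pos.mp hpos
  obtain ⟨s, hs, i, hi⟩ := exists_smul_le_and_apply_eq hPx (A *ᵥ (P *ᵥ x))
  have hts : t < s := lt_of_mul_lt_mul_right (hi ▸ hstrict i) (hPx i).le
  obtain ⟨q, hq, rfl⟩ := exists_mem_collatzWielandtSet (ht.trans hts.le) hPx hs
  exact hts.not_ge (hmax hq)

lemma exists_pos_eigenvector [Nonempty ι] (hA : A.IsIrreducible) :
    ∃ (t : ℝ) (x : ι → ℝ), 0 < t ∧ (∀ i, 0 < x i) ∧ A *ᵥ x = t • x := by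
  obtain ⟨⟨t, x⟩, hmem, hmax⟩ := (isCompact_collatzWielandtSet hA.nonneg).exists_isMaxOn
    (collatzWielandtSet_nonempty hA.nonneg) continuous_fst.continuousOn
  have heigen : A *ᵥ x = t • x := mulVec_eq_smul_of_isMaxOn_collatzWielandtSet hA hmem hmax
  obtain ⟨-, hx, -⟩ := hmem
  have hx₀ : x ≠ 0 := ne_zero_of_mem_stdSimplex hx
  obtain ⟨ht, hpos⟩ := pos_of_isIrreducible_of_mulVec_eq_smul hA hx.1 hx₀ heigen
  exact ⟨t, x, ht, hpos, heigen⟩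

end PerronFrobenius

section NEBS

variable {m n : Type*} [Fintype m] [Fintype n] {W : Matrix m n ℝ} {W' : Matrix n m ℝ}

/-- `p = (a, b)` is a normed eigenvector bicentrality sequence for `(W, W')`. The norms are
Euclidean, hence the passage through `WithLp.toLp 2`: the norm of `n → ℝ` is the sup norm. -/
def IsNEBS (W : Matrix m n ℝ) (W' : Matrix n m ℝ) (p : (n → ℝ) × (m → ℝ)) : Prop :=
  (∀ i, 0 < p.1 i) ∧ (∀ i, 0 < p.2 i) ∧ ‖WithLp.toLp 2 p.1‖ = 1 ∧ ‖WithLp.toLp 2 p.2‖ = 1 ∧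
    ∃ l mu : ℝ, 0 < l ∧ 0 < mu ∧ p.2 = l • W *ᵥ p.1 ∧ p.1 = mu • W' *ᵥ p.2

lemma eq_of_sameRay_of_norm_toLp_eq {x y : n → ℝ} (hray : SameRay ℝ x y)
    (hnorm : ‖WithLp.toLp 2 x‖ = ‖WithLp.toLp 2 y‖) : x = y :=
  WithLp.toLp_injective 2 <|
    (hray.map (WithLp.linearEquiv 2 ℝ (n → ℝ)).symm.toLinearMap).eq_of_norm_eq hnorm

lemma norm_toLp_inv_norm_smul {x : n → ℝ} (hx : x ≠ 0) :
    ‖WithLp.toLp 2 (‖WithLp.toLp 2 x‖⁻¹ • x)‖ = 1 :=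
  norm_smul_inv_norm (𝕜 := ℝ) ((WithLp.toLp_eq_zero 2).not.mpr hx)

lemma IsNEBS.exists_mul_mulVec_eq_smul {p : (n → ℝ) × (m → ℝ)} (hp : IsNEBS W W' p) :
    ∃ t : ℝ, (W' * W) *ᵥ p.1 = t • p.1 := by
  obtain ⟨-, -, -, -, l, mu, hl, hmu, hb, ha⟩ := hp
  refine ⟨(mu * l)⁻¹, (eq_inv_smul_iff₀ (mul_pos hmu hl).ne').mpr ?_⟩
  rw [← mulVec_mulVec, mul_smul, ← mulVec_smul, ← hb, ← ha]

lemma IsNEBS.eq_of_isIrreducible (hirr : (W' * W).IsIrreducible) {p q : (n → ℝ) × (m → ℝ)}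
    (hp : IsNEBS W W' p) (hq : IsNEBS W W' q) : p = q := by
  obtain ⟨s, hs⟩ := hp.exists_mul_mulVec_eq_smul
  obtain ⟨t, ht⟩ := hq.exists_mul_mulVec_eq_smul
  obtain ⟨hp₁, -, hnp₁, hnp₂, l, -, hl, -, hbp, -⟩ := hp
  obtain ⟨hq₁, -, hnq₁, hnq₂, l', -, hl', -, hbq, -⟩ := hq
  have hfst : p.1 = q.1 := eq_of_sameRay_of_norm_toLp_eq
    (sameRay_of_isIrreducible_of_mulVec_eq_smul hirr hp₁ hq₁ hs ht) (hnp₁.trans hnq₁.symm)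
  have hray : SameRay ℝ p.2 q.2 := by
    rw [hbp, hbq, hfst]
    exact (SameRay.rfl.pos_smul_left hl).pos_smul_right hl'
  exact Prod.ext hfst (eq_of_sameRay_of_norm_toLp_eq hray (hnp₂.trans hnq₂.symm))

lemma isNEBS_of_mul_mulVec_eq_smul [Nonempty n] {t : ℝ} {x : n → ℝ} (ht : 0 < t)
    (hx : ∀ i, 0 < x i) (hWx : ∀ i, 0 < (W *ᵥ x) i) (heigen : (W' * W) *ᵥ x = t • x) :
    IsNEBS W W' (‖WithLp.toLp 2 x‖⁻¹ • x, ‖WithLp.toLp 2 (W *ᵥ x)‖⁻¹ • W *ᵥ x) := by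
  rw [← mulVec_mulVec] at heigen
  have hx₀ : x ≠ 0 := fun h ↦ (hx (Classical.arbitrary n)).ne' (congrFun h _)
  have hWx₀ : W *ᵥ x ≠ 0 := fun h ↦ by
    rw [h, mulVec_zero] at heigen
    exact smul_ne_zero ht.ne' hx₀ heigen.symm
  have hα : 0 < ‖WithLp.toLp 2 x‖ := norm_pos_iff.mpr ((WithLp.toLp_eq_zero 2).not.mpr hx₀)
  have hβ : 0 < ‖WithLp.toLp 2 (W *ᵥ x)‖ :=
    norm_pos_iff.mpr ((WithLp.toLp_eq_zero 2).not.mpr hWx₀)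
  refine ⟨fun i ↦ mul_pos (inv_pos.mpr hα) (hx i), fun i ↦ mul_pos (inv_pos.mpr hβ) (hWx i),
    norm_toLp_inv_norm_smul hx₀, norm_toLp_inv_norm_smul hWx₀, ?_⟩
  set α := ‖WithLp.toLp 2 x‖
  set β := ‖WithLp.toLp 2 (W *ᵥ x)‖
  refine ⟨β⁻¹ * α, α⁻¹ * t⁻¹ * β, by positivity, by positivity, ?_, ?_⟩
  · rw [mulVec_smul, smul_smul, mul_inv_cancel_right₀ hα.ne']
  · rw [mulVec_smul, heigen, smul_smul, smul_smul, mul_inv_cancel_right₀ hβ.ne',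
      inv_mul_cancel_right₀ ht.ne']

theorem nebs_exists_unique_of_irreducible_general [Nonempty n] (hW : ∀ i j, 0 ≤ W i j)
    (hrow : ∀ i, ∃ j, 0 < W i j) (hirr : (W' * W).IsIrreducible) : ∃! p, IsNEBS W W' p := by
  obtain ⟨t, x, ht, hx, heigen⟩ := exists_pos_eigenvector hirr
  have hWx (i : m) : 0 < (W *ᵥ x) i := by
    obtain ⟨j, hj⟩ := hrow i
    exact mulVec_apply_pos (hW i) (fun k ↦ (hx k).le) hj (hx j)
  exact ⟨_, isNEBS_of_mul_mulVec_eq_smul ht hx hWx heigen,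
    fun q hq ↦ hq.eq_of_isIrreducible hirr (isNEBS_of_mul_mulVec_eq_smul ht hx hWx heigen)⟩

end NEBS

/-- Remark 3.3 of the paper.
Let `W` be an `m × n` nonnegative real matrix and `W'` an `n × m` nonnegative real
matrix (`m, n ≥ 2`), and suppose both `W·W'` and `W'·W` are nonnegative and
irreducible (the directed graph with an edge from `j` to `i` whenever the `(i, j)`
entry is nonzero is strongly connected). Then there is exactly one pair `(a, b)` of
vectors with all entries positive and Euclidean norms `1` such that
`b = λ • (W · a)` and `a = μ • (W' · b)` for some `λ, μ > 0`. -/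
theorem nebs_exists_unique_of_irreducible (m n : ℕ) (hm : 2 ≤ m) (hn : 2 ≤ n)
    (W : Matrix (Fin m) (Fin n) ℝ) (W' : Matrix (Fin n) (Fin m) ℝ)
    (hW : ∀ i j, 0 ≤ W i j) (hW' : ∀ i j, 0 ≤ W' i j)
    (hWW'nonneg : ∀ i j, 0 ≤ (W * W') i j)
    (hW'Wnonneg : ∀ i j, 0 ≤ (W' * W) i j)
    (hWW'irr : ∀ i j : Fin m,
      Relation.ReflTransGen (fun u v : Fin m => (W * W') v u ≠ 0) i j)
    (hW'Wirr : ∀ i j : Fin n,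
      Relation.ReflTransGen (fun u v : Fin n => (W' * W) v u ≠ 0) i j) :
    ∃! p : (Fin n → ℝ) × (Fin m → ℝ),
      (∀ i, 0 < p.1 i) ∧ (∀ i, 0 < p.2 i) ∧
      ‖(WithLp.equiv 2 (Fin n → ℝ)).symm p.1‖ = 1 ∧
      ‖(WithLp.equiv 2 (Fin m → ℝ)).symm p.2‖ = 1 ∧
      ∃ l mu : ℝ, 0 < l ∧ 0 < mu ∧
        p.2 = l • W.mulVec p.1 ∧ p.1 = mu • W'.mulVec p.2 := by
  have := Fin.nontrivial_iff_two_le.mpr hm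
  have := Fin.nontrivial_iff_two_le.mpr hn
  exact nebs_exists_unique_of_irreducible_general hW
    (exists_pos_of_isIrreducible_mul hW (isIrreducible_of_reflTransGen hWW'nonneg hWW'irr))
    (isIrreducible_of_reflTransGen hW'Wnonneg hW'Wirr)
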